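/- arXiv:1206.5504 — 2 statements merged into one kernel-verified Lean document; each statement's English description precedes it below -/
import Mathlib

section
/- Let V be a finite-dimensional complex vector space with a nondegenerate bilinear form B that is either symmetric or alternating, and let C, C' be endomorphisms of V skew-symmetric with respect to B. Let V_N, V_I denote the Fitting components of C and V'_N, V'_I those of C'. Then there exists an isometry P of (V, B) with C' = P ∘ C ∘ P⁻¹ if and only if there exist linear isomorphisms P_N : V_N → V'_N and P_I : V_I → V'_I such that B(P_N x, P_N y) = B(x, y) for all x, y ∈ V_N, B(P_I x, P_I y) = B(x, y) for all x, y ∈ V_I, P_N(C x) = C'(P_N x) for all x ∈ V_N, and P_I(C x) = C'(P_I x) for all x ∈ V_I. (This is Proposition 1.5.1: the isometry class of a skew-symmetric map is determined by the isometry classes of its nilpotent and invertible Fitting components.) -/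
/-- The nilpotent Fitting component of an endomorphism: `⋃ₖ ker (C^k)`. -/
def fittingNil {V : Type*} [AddCommGroup V] [Module ℂ V] (C : V →ₗ[ℂ] V) :
    Submodule ℂ V :=
  ⨆ k : ℕ, LinearMap.ker (C ^ k)

/-- The invertible Fitting component of an endomorphism: `⋂ₖ range (C^k)`. -/
def fittingInv {V : Type*} [AddCommGroup V] [Module ℂ V] (C : V →ₗ[ℂ] V) :
    Submodule ℂ V :=
  ⨅ k : ℕ, LinearMap.range (C ^ k)

/-!
Each power `f ^ k` of a skew-adjoint map has adjoint `(-1) ^ k • f ^ k`, so `ker (f ^ k)` is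
orthogonal to `range (f ^ k)`. The Fitting decomposition is therefore an orthogonal sum of invariant
submodules, and isometries of the two summands glue to an isometry of the whole module. In the other
direction, Fitting components are functorial: an equivalence intertwining two endomorphisms carries
the components of one onto those of the other.
-/

open Function LinearMap

section Fitting

variable {R M M' : Type*} [Semiring R] [AddCommMonoid M] [Module R M] [AddCommMonoid M']
  [Module R M'] {f : Module.End R M} {f' : Module.End R M'}

theorem semiconj_pow {φ : M → M'} (h : Semiconj φ f f') (k : ℕ) :
    Semiconj φ (f ^ k : Module.End R M) (f' ^ k : Module.End R M') := by
  simpa only [Module.End.coe_pow] using h.iterate_right k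

theorem iSup_ker_pow_le_comap {φ : M →ₗ[R] M'} (h : Semiconj φ f f') :
    ⨆ k : ℕ, ker (f ^ k) ≤ (⨆ k : ℕ, ker (f' ^ k)).comap φ := by
  refine iSup_le fun k x hx => Submodule.mem_iSup_of_mem k ?_
  rw [mem_ker] at hx ⊢
  rw [← semiconj_pow h k x, hx, map_zero]

theorem iInf_range_pow_le_comap {φ : M →ₗ[R] M'} (h : Semiconj φ f f') :
    ⨅ k : ℕ, range (f ^ k) ≤ (⨅ k : ℕ, range (f' ^ k)).comap φ := by
  intro x hx
  refine (Submodule.mem_iInf _).2 fun k => ?_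
  obtain ⟨y, rfl⟩ := (Submodule.mem_iInf _).1 hx k
  exact ⟨φ y, (semiconj_pow h k y).symm⟩

theorem map_iSup_ker_pow {e : M ≃ₗ[R] M'} (h : Semiconj e f f') :
    (⨆ k : ℕ, ker (f ^ k)).map (e : M →ₗ[R] M') = ⨆ k : ℕ, ker (f' ^ k) := by
  have h_symm : Semiconj e.symm f' f := h.inverse_left e.left_inv e.right_inv
  refine le_antisymm (Submodule.map_le_iff_le_comap.2 (iSup_ker_pow_le_comap h)) ?_
  rw [Submodule.map_equiv_eq_comap_symm]
  exact iSup_ker_pow_le_comap h_symm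

theorem map_iInf_range_pow {e : M ≃ₗ[R] M'} (h : Semiconj e f f') :
    (⨅ k : ℕ, range (f ^ k)).map (e : M →ₗ[R] M') = ⨅ k : ℕ, range (f' ^ k) := by
  have h_symm : Semiconj e.symm f' f := h.inverse_left e.left_inv e.right_inv
  refine le_antisymm (Submodule.map_le_iff_le_comap.2 (iInf_range_pow_le_comap h)) ?_
  rw [Submodule.map_equiv_eq_comap_symm]
  exact iInf_range_pow_le_comap h_symm

end Fitting

section SkewAdjoint

variable {R M N : Type*} [CommRing R] [AddCommGroup M] [Module R M] [AddCommGroup N] [Module R N]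
  {B : M →ₗ[R] M →ₗ[R] N} {f : Module.End R M}

theorem apply_pow_of_isSkewAdjoint (hf : B.IsSkewAdjoint f) (k : ℕ) (x y : M) :
    B ((f ^ k) x) y = (-1 : R) ^ k • B x ((f ^ k) y) := by
  induction k generalizing x with
  | zero => simp
  | succ k ih =>
    calc B ((f ^ (k + 1)) x) y = (-1 : R) ^ k • B (f x) ((f ^ k) y) := by
          rw [pow_succ, Module.End.mul_apply, ih]
      _ = (-1 : R) ^ k • B x (-f ((f ^ k) y)) := by rw [hf]; rfl
      _ = (-1 : R) ^ (k + 1) • B x ((f ^ (k + 1)) y) := by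
          rw [map_neg, pow_succ (-1 : R), mul_neg_one, neg_smul, smul_neg, pow_succ' f,
            Module.End.mul_apply]

theorem isSkewAdjoint_flip (hf : B.IsSkewAdjoint f) : B.flip.IsSkewAdjoint f := by
  intro x y
  have h := hf y x
  simp only [Pi.neg_apply, map_neg, flip_apply] at h ⊢
  rw [h, neg_neg]

theorem apply_eq_zero_of_mem_iSup_ker_pow_of_mem_iInf_range_pow (hf : B.IsSkewAdjoint f) {x y : M}
    (hx : x ∈ ⨆ k : ℕ, ker (f ^ k)) (hy : y ∈ ⨅ k : ℕ, range (f ^ k)) : B x y = 0 := by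
  suffices h : ⨆ k : ℕ, ker (f ^ k) ≤ ker (B.flip y) from h hx
  refine iSup_le fun k z hz => ?_
  obtain ⟨w, rfl⟩ := (Submodule.mem_iInf _).1 hy k
  have h_zero : (-1 : R) ^ k • B z ((f ^ k) w) = 0 := by
    rw [← apply_pow_of_isSkewAdjoint hf, mem_ker.1 hz, map_zero, LinearMap.zero_apply]
  exact (isUnit_one.neg.pow k).smul_eq_zero.1 h_zero

theorem fitting_orthogonal_of_isSkewAdjoint (hf : B.IsSkewAdjoint f)
    (x : ↥(⨆ k : ℕ, ker (f ^ k))) (y : ↥(⨅ k : ℕ, range (f ^ k))) : B x y = 0 ∧ B y x = 0 :=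
  ⟨apply_eq_zero_of_mem_iSup_ker_pow_of_mem_iInf_range_pow hf x.2 y.2,
    apply_eq_zero_of_mem_iSup_ker_pow_of_mem_iInf_range_pow (isSkewAdjoint_flip hf) x.2 y.2⟩

end SkewAdjoint

theorem bilin_ext_on_codisjoint {R M N : Type*} [CommSemiring R] [AddCommMonoid M] [Module R M]
    [AddCommMonoid N] [Module R N] {p q : Submodule R M} {B₁ B₂ : M →ₗ[R] M →ₗ[R] N}
    (h : Codisjoint p q) (hpp : ∀ x y : p, B₁ x y = B₂ x y)
    (hpq : ∀ (x : p) (y : q), B₁ x y = B₂ x y) (hqp : ∀ (x : q) (y : p), B₁ x y = B₂ x y)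
    (hqq : ∀ x y : q, B₁ x y = B₂ x y) : B₁ = B₂ :=
  ext_on_codisjoint h
    (fun x hx => ext_on_codisjoint h (fun y hy => hpp ⟨x, hx⟩ ⟨y, hy⟩)
      (fun y hy => hpq ⟨x, hx⟩ ⟨y, hy⟩))
    (fun x hx => ext_on_codisjoint h (fun y hy => hqp ⟨x, hx⟩ ⟨y, hy⟩)
      (fun y hy => hqq ⟨x, hx⟩ ⟨y, hy⟩))

section Gluing

variable {R M M' : Type*} [Ring R] [AddCommGroup M] [Module R M] [AddCommGroup M'] [Module R M']
  {p' q' : Submodule R M'} {p q : Submodule R M}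

/-- The direct sum of two linear equivalences between corresponding summands of two direct sum
decompositions, used to assemble a conjugating isometry from its restrictions to the Fitting
components. -/
noncomputable def equivOfIsCompl (h : IsCompl p q) (h' : IsCompl p' q') (e₁ : p ≃ₗ[R] p')
    (e₂ : q ≃ₗ[R] q') : M ≃ₗ[R] M' :=
  (p.prodEquivOfIsCompl q h).symm ≪≫ₗ e₁.prodCongr e₂ ≪≫ₗ p'.prodEquivOfIsCompl q' h'

variable {h : IsCompl p q} {h' : IsCompl p' q'} {e₁ : p ≃ₗ[R] p'} {e₂ : q ≃ₗ[R] q'}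

theorem equivOfIsCompl_apply_left (x : p) : equivOfIsCompl h h' e₁ e₂ x = e₁ x := by
  simp [equivOfIsCompl]

theorem equivOfIsCompl_apply_right (y : q) : equivOfIsCompl h h' e₁ e₂ y = e₂ y := by
  simp [equivOfIsCompl]

theorem equivOfIsCompl_semiconj {f : Module.End R M} {f' : Module.End R M'}
    (hp : p ≤ p.comap f) (hq : q ≤ q.comap f)
    (he₁ : ∀ (x : p) (hx : f x ∈ p), (e₁ ⟨f x, hx⟩ : M') = f' (e₁ x))
    (he₂ : ∀ (y : q) (hy : f y ∈ q), (e₂ ⟨f y, hy⟩ : M') = f' (e₂ y)) :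
    Semiconj (equivOfIsCompl h h' e₁ e₂) f f' := by
  set e := equivOfIsCompl h h' e₁ e₂
  have e_left (x : p) : e x = e₁ x := equivOfIsCompl_apply_left x
  have e_right (y : q) : e y = e₂ y := equivOfIsCompl_apply_right y
  suffices h_comp : (e : M →ₗ[R] M') ∘ₗ f = f' ∘ₗ e from LinearMap.congr_fun h_comp
  refine ext_on_codisjoint h.codisjoint (fun x hx => ?_) (fun y hy => ?_)
  · have hfx : f x ∈ p := hp hx
    calc e (f x) = e₁ ⟨f x, hfx⟩ := e_left ⟨f x, hfx⟩
      _ = f' (e₁ ⟨x, hx⟩) := he₁ ⟨x, hx⟩ hfx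
      _ = f' (e x) := by rw [← e_left]
  · have hfy : f y ∈ q := hq hy
    calc e (f y) = e₂ ⟨f y, hfy⟩ := e_right ⟨f y, hfy⟩
      _ = f' (e₂ ⟨y, hy⟩) := he₂ ⟨y, hy⟩ hfy
      _ = f' (e y) := by rw [← e_right]

end Gluing

theorem equivOfIsCompl_isometry {R M M' N : Type*} [CommRing R] [AddCommGroup M] [Module R M]
    [AddCommGroup M'] [Module R M'] [AddCommGroup N] [Module R N] {p q : Submodule R M}
    {p' q' : Submodule R M'} {h : IsCompl p q} {h' : IsCompl p' q'} {e₁ : p ≃ₗ[R] p'}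
    {e₂ : q ≃ₗ[R] q'} {B : M →ₗ[R] M →ₗ[R] N} {B' : M' →ₗ[R] M' →ₗ[R] N}
    (hB : ∀ (x : p) (y : q), B x y = 0 ∧ B y x = 0)
    (hB' : ∀ (x : p') (y : q'), B' x y = 0 ∧ B' y x = 0)
    (he₁ : ∀ x y : p, B' (e₁ x) (e₁ y) = B x y) (he₂ : ∀ x y : q, B' (e₂ x) (e₂ y) = B x y)
    (x y : M) : B' (equivOfIsCompl h h' e₁ e₂ x) (equivOfIsCompl h h' e₁ e₂ y) = B x y := by
  set e := equivOfIsCompl h h' e₁ e₂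
  have e_left (x : p) : e x = e₁ x := equivOfIsCompl_apply_left x
  have e_right (y : q) : e y = e₂ y := equivOfIsCompl_apply_right y
  suffices h_pullback : B'.compl₁₂ (e : M →ₗ[R] M') (e : M →ₗ[R] M') = B from
    congr_fun₂ h_pullback x y
  refine bilin_ext_on_codisjoint h.codisjoint ?_ ?_ ?_ ?_ <;> intro x y <;>
    simp only [compl₁₂_apply, LinearEquiv.coe_coe, e_left, e_right, he₁, he₂, hB, hB']

theorem stmt8_general {R M M' N : Type*} [CommRing R] [AddCommGroup M] [Module R M]
    [AddCommGroup M'] [Module R M'] [AddCommGroup N] [Module R N] [IsNoetherian R M]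
    [IsArtinian R M] [IsNoetherian R M'] [IsArtinian R M'] {B : M →ₗ[R] M →ₗ[R] N}
    {B' : M' →ₗ[R] M' →ₗ[R] N} {f : Module.End R M} {f' : Module.End R M'}
    (hf : B.IsSkewAdjoint f) (hf' : B'.IsSkewAdjoint f') :
    (∃ P : M ≃ₗ[R] M', (∀ x y : M, B' (P x) (P y) = B x y) ∧ ∀ x : M, P (f x) = f' (P x)) ↔
    (∃ (PN : ↥(⨆ k : ℕ, ker (f ^ k)) ≃ₗ[R] ↥(⨆ k : ℕ, ker (f' ^ k)))
       (PI : ↥(⨅ k : ℕ, range (f ^ k)) ≃ₗ[R] ↥(⨅ k : ℕ, range (f' ^ k))),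
      (∀ x y : ↥(⨆ k : ℕ, ker (f ^ k)), B' (PN x) (PN y) = B x y) ∧
      (∀ x y : ↥(⨅ k : ℕ, range (f ^ k)), B' (PI x) (PI y) = B x y) ∧
      (∀ (x : ↥(⨆ k : ℕ, ker (f ^ k))) (hx : f x ∈ ⨆ k : ℕ, ker (f ^ k)),
        (PN ⟨f x, hx⟩ : M') = f' (PN x)) ∧
      (∀ (x : ↥(⨅ k : ℕ, range (f ^ k))) (hx : f x ∈ ⨅ k : ℕ, range (f ^ k)),
        (PI ⟨f x, hx⟩ : M') = f' (PI x))) := by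
  constructor
  · rintro ⟨P, hP, hPf⟩
    exact ⟨P.ofSubmodules _ _ (map_iSup_ker_pow hPf), P.ofSubmodules _ _ (map_iInf_range_pow hPf),
      fun x y => hP x y, fun x y => hP x y, fun x _ => hPf x, fun x _ => hPf x⟩
  · rintro ⟨PN, PI, hPN, hPI, hPNf, hPIf⟩
    have f_semiconj : Semiconj f f f := fun _ => rfl
    exact ⟨equivOfIsCompl (isCompl_iSup_ker_pow_iInf_range_pow f)
        (isCompl_iSup_ker_pow_iInf_range_pow f') PN PI,
      equivOfIsCompl_isometry (fitting_orthogonal_of_isSkewAdjoint hf)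
        (fitting_orthogonal_of_isSkewAdjoint hf') hPN hPI,
      equivOfIsCompl_semiconj (iSup_ker_pow_le_comap f_semiconj)
        (iInf_range_pow_le_comap f_semiconj) hPNf hPIf⟩

/-- Two skew-symmetric maps are conjugate by an isometry if and only if
their nilpotent Fitting components and their invertible Fitting components are
conjugate by isometries. -/
theorem stmt8 {V : Type*} [AddCommGroup V] [Module ℂ V] [FiniteDimensional ℂ V]
    (B : LinearMap.BilinForm ℂ V) (hB : B.Nondegenerate)
    (hBsa : (∀ x y : V, B x y = B y x) ∨ (∀ x y : V, B x y = - B y x))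
    (C C' : V →ₗ[ℂ] V)
    (hC : ∀ x y : V, B (C x) y = - B x (C y))
    (hC' : ∀ x y : V, B (C' x) y = - B x (C' y)) :
    (∃ P : V ≃ₗ[ℂ] V, (∀ x y : V, B (P x) (P y) = B x y) ∧
        ∀ x : V, P (C x) = C' (P x)) ↔
    (∃ (PN : ↥(fittingNil C) ≃ₗ[ℂ] ↥(fittingNil C'))
       (PI : ↥(fittingInv C) ≃ₗ[ℂ] ↥(fittingInv C')),
      (∀ x y : ↥(fittingNil C), B (↑(PN x)) (↑(PN y)) = B (↑x) (↑y)) ∧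
      (∀ x y : ↥(fittingInv C), B (↑(PI x)) (↑(PI y)) = B (↑x) (↑y)) ∧
      (∀ (x : ↥(fittingNil C)) (h : C ↑x ∈ fittingNil C),
        (↑(PN ⟨C ↑x, h⟩) : V) = C' ↑(PN x)) ∧
      (∀ (x : ↥(fittingInv C)) (h : C ↑x ∈ fittingInv C),
        (↑(PI ⟨C ↑x, h⟩) : V) = C' ↑(PI x))) := by
  have skew {f : V →ₗ[ℂ] V} (hf : ∀ x y : V, B (f x) y = - B x (f y)) : B.IsSkewAdjoint f :=
    fun x y => (hf x y).trans (map_neg (B x) (f y)).symm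
  exact stmt8_general (skew hC) (skew hC')
end

section
/- Let V be a finite-dimensional complex vector space with a nondegenerate bilinear form B that is either symmetric or alternating, and let C be an endomorphism of V skew-symmetric with respect to B. Let V_N = ⋃ₖ ker(C^k) and V_I = ⋂ₖ range(C^k) be the Fitting components of C. Then V_I = {v ∈ V : B(v, w) = 0 for all w ∈ V_N}, i.e. V_I is the B-orthogonal of V_N, and the restrictions of B to V_N × V_N and to V_I × V_I are nondegenerate. -/
/-!
If `f` and `g` are adjoint for a pairing `B`, so are `f ^ k` and `g ^ k`. Hence
`B (f ^ k z) y = B z (g ^ k y)`, so that the invertible Fitting component of each map is orthogonal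
to the nilpotent Fitting component of the other. Since the Fitting components span the module, a
vector of one component orthogonal to the same-named component of the other map is orthogonal to
everything, hence zero. A skew-symmetric `C` is adjoint to `-C`, which has the same Fitting
components as `C`.
-/

section Pairing

open LinearMap Submodule

variable {R M₁ M₂ N : Type*} [CommSemiring R] [AddCommMonoid M₁] [Module R M₁]
  [AddCommMonoid M₂] [Module R M₂] [AddCommMonoid N] [Module R N]
  {B : M₁ →ₗ[R] M₂ →ₗ[R] N} {p p' : Submodule R M₁} {q q' : Submodule R M₂}

theorem separatingLeft_domRestrict₁₂_of_codisjoint (hB : B.SeparatingLeft)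
    (hq : Codisjoint q q') (hpq' : q' ≤ p.orthogonalBilin B) :
    (B.domRestrict₁₂ p q).SeparatingLeft := by
  rintro ⟨x, hx⟩ hxq
  have hx_zero : x = 0 := hB x fun y ↦ by
    obtain ⟨a, b, ha, hb, rfl⟩ := codisjoint_iff_exists_add_eq.1 hq y
    have hxa : B x a = 0 := hxq ⟨a, ha⟩
    have hxb : B x b = 0 := hpq' hb x hx
    rw [map_add, hxa, hxb, add_zero]
  exact Subtype.ext hx_zero

theorem nondegenerate_domRestrict₁₂_of_codisjoint (hB : B.Nondegenerate)
    (hp : Codisjoint p p') (hq : Codisjoint q q')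
    (hpq' : q' ≤ p.orthogonalBilin B) (hp'q : p' ≤ q.orthogonalBilin B.flip) :
    (B.domRestrict₁₂ p q).Nondegenerate :=
  ⟨separatingLeft_domRestrict₁₂_of_codisjoint hB.1 hq hpq',
    flip_separatingLeft.1 <|
      separatingLeft_domRestrict₁₂_of_codisjoint (flip_separatingLeft.2 hB.2) hp hp'q⟩

theorem eq_orthogonalBilin_flip_of_codisjoint (h : (B.domRestrict₁₂ p q).SeparatingLeft)
    (hp : Codisjoint p p') (hp'q : p' ≤ q.orthogonalBilin B.flip) :
    p' = q.orthogonalBilin B.flip := by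
  refine le_antisymm hp'q fun x hx ↦ ?_
  obtain ⟨a, b, ha, hb, rfl⟩ := codisjoint_iff_exists_add_eq.1 hp x
  have haq : ∀ y ∈ q, B a y = 0 := fun y hy ↦ by
    have hby : B b y = 0 := hp'q hb y hy
    have haby : B (a + b) y = 0 := hx y hy
    rwa [map_add₂, hby, add_zero] at haby
  have ha_zero : a = 0 := congrArg Subtype.val (h ⟨a, ha⟩ fun y ↦ haq y y.2)
  rwa [ha_zero, zero_add]

end Pairing

section AdjointPair

open LinearMap

variable {R M N : Type*} [CommSemiring R] [AddCommMonoid M] [Module R M]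
  [AddCommMonoid N] [Module R N] {B : M →ₗ[R] M →ₗ[R] N} {f g : Module.End R M}

theorem isAdjointPair_pow (h : IsAdjointPair B B f g) (k : ℕ) :
    IsAdjointPair B B ⇑(f ^ k) ⇑(g ^ k) := by
  induction k with
  | zero => exact isAdjointPair_one
  | succ k ih =>
    rw [pow_succ f, pow_succ' g]
    exact ih.mul h

theorem isAdjointPair_flip (h : IsAdjointPair B B f g) : IsAdjointPair B.flip B.flip g f :=
  fun x y ↦ (h y x).symm

theorem iSup_ker_pow_le_orthogonalBilin_iInf_range_pow (h : IsAdjointPair B B f g) :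
    ⨆ k, ker (g ^ k) ≤ (⨅ k, range (f ^ k)).orthogonalBilin B := by
  refine iSup_le fun k y hy x hx ↦ ?_
  obtain ⟨z, rfl⟩ := (Submodule.mem_iInf _).1 hx k
  rw [isAdjointPair_pow h k z y, mem_ker.1 hy, map_zero]

theorem iInf_range_pow_le_orthogonalBilin_flip_iSup_ker_pow (h : IsAdjointPair B B f g) :
    ⨅ k, range (f ^ k) ≤ (⨆ k, ker (g ^ k)).orthogonalBilin B.flip :=
  fun x hx _ hy ↦ iSup_ker_pow_le_orthogonalBilin_iInf_range_pow h hy x hx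

end AdjointPair

section Neg

variable {R M : Type*} [Ring R] [AddCommGroup M] [Module R M] (f : Module.End R M)

theorem ker_neg_pow (k : ℕ) : LinearMap.ker ((-f) ^ k) = LinearMap.ker (f ^ k) := by
  rcases k.even_or_odd with hk | hk
  · rw [hk.neg_pow]
  · rw [hk.neg_pow, LinearMap.ker_neg]

theorem range_neg_pow (k : ℕ) : LinearMap.range ((-f) ^ k) = LinearMap.range (f ^ k) := by
  rcases k.even_or_odd with hk | hk
  · rw [hk.neg_pow]
  · rw [hk.neg_pow, LinearMap.range_neg]

theorem iSup_ker_neg_pow :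
    ⨆ k : ℕ, LinearMap.ker ((-f) ^ k) = ⨆ k : ℕ, LinearMap.ker (f ^ k) :=
  iSup_congr fun k ↦ ker_neg_pow f k

theorem iInf_range_neg_pow :
    ⨅ k : ℕ, LinearMap.range ((-f) ^ k) = ⨅ k : ℕ, LinearMap.range (f ^ k) :=
  iInf_congr fun k ↦ range_neg_pow f k

end Neg

open LinearMap in
theorem stmt9_general {R V N : Type*} [CommRing R] [AddCommGroup V] [Module R V]
    [IsNoetherian R V] [IsArtinian R V] [AddCommMonoid N] [Module R N]
    {B : V →ₗ[R] V →ₗ[R] N} (hB : B.Nondegenerate) {C D : Module.End R V}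
    (hCD : IsAdjointPair B B C D) :
    ⨅ k, range (C ^ k) = (⨆ k, ker (D ^ k)).orthogonalBilin B.flip ∧
    (B.domRestrict₁₂ (⨆ k, ker (C ^ k)) (⨆ k, ker (D ^ k))).Nondegenerate ∧
    (B.domRestrict₁₂ (⨅ k, range (C ^ k)) (⨅ k, range (D ^ k))).Nondegenerate := by
  have hC := C.isCompl_iSup_ker_pow_iInf_range_pow.codisjoint
  have hD := D.isCompl_iSup_ker_pow_iInf_range_pow.codisjoint
  have hDC := isAdjointPair_flip hCD
  have hNil : (B.domRestrict₁₂ (⨆ k, ker (C ^ k)) (⨆ k, ker (D ^ k))).Nondegenerate :=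
    nondegenerate_domRestrict₁₂_of_codisjoint hB hC hD
      (iInf_range_pow_le_orthogonalBilin_flip_iSup_ker_pow hDC)
      (iInf_range_pow_le_orthogonalBilin_flip_iSup_ker_pow hCD)
  have hInv : (B.domRestrict₁₂ (⨅ k, range (C ^ k)) (⨅ k, range (D ^ k))).Nondegenerate :=
    nondegenerate_domRestrict₁₂_of_codisjoint hB hC.symm hD.symm
      (iSup_ker_pow_le_orthogonalBilin_iInf_range_pow hCD)
      (iSup_ker_pow_le_orthogonalBilin_iInf_range_pow hDC)
  exact ⟨eq_orthogonalBilin_flip_of_codisjoint hNil.1 hC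
    (iInf_range_pow_le_orthogonalBilin_flip_iSup_ker_pow hCD), hNil, hInv⟩

/-- For a skew-symmetric map `C`, the invertible Fitting component is the
`B`-orthogonal of the nilpotent one, and `B` restricts nondegenerately to both. -/
theorem stmt9 {V : Type*} [AddCommGroup V] [Module ℂ V] [FiniteDimensional ℂ V]
    (B : LinearMap.BilinForm ℂ V) (hB : B.Nondegenerate)
    (hBsa : (∀ x y : V, B x y = B y x) ∨ (∀ x y : V, B x y = - B y x))
    (C : V →ₗ[ℂ] V)
    (hC : ∀ x y : V, B (C x) y = - B x (C y)) :
    (∀ v : V, v ∈ fittingInv C ↔ ∀ w ∈ fittingNil C, B v w = 0) ∧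
    (B.restrict (fittingNil C)).Nondegenerate ∧
    (B.restrict (fittingInv C)).Nondegenerate := by
  have h := stmt9_general hB (C := C) (D := -C) fun x y ↦ by simp [hC]
  rwa [iSup_ker_neg_pow, iInf_range_neg_pow, SetLike.ext_iff] at h
end
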